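/- For every 0 < ε < 1 there exists C > 0 such that, for p ≥ C log n / n, the binomial random graph G = G_{n,p} asymptotically almost surely satisfies: for every H ∈ H^{ε,ε}_{n,p}(G) and G' := G ∖ H, and for every set X ⊆ V with |X| ≥ n(log n)^{-1/2}, we have |N_{G'}(X)| > (1 − ε²/10) p^{-1} δ_{G'}(X); in particular, |N_{G'}(X)| ≥ εn/2. -/

import Mathlib

/-!
Call `G = G_{n,p}` typical (`IsTypical`) with error `γ` if every degree is at least
`(n-1)p - γpn` and, for all `X` with `|X| ≥ n / log n` and *all* `Y`, at most
`p|X||Y| + γpn|X|` ordered pairs in `X × Y` span an edge.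

*Random graphs are typical.* Independence of the edges gives Chernoff bounds `exp(-γ²pn/8)` for
a degree and `exp(-γ²pn|X|/8)` for a pair `(X, Y)`. If `p ≥ (16/γ²) log n / n`, these are at most
`n⁻²` and `exp(-2n)`, which beat the `n` vertices and the `4^n` pairs.

*Typical graphs expand.* The second alternative of the Chvátal condition for `i = 1` would be a
negative upper bound on a degree, so the first one holds and `Δ(H) ≤ (n-1)p - εpn`. Hence
`δ := δ_{G'}(X) ≥ (ε-γ)pn`. All `G'`-edges at `X` end in `Y := N_{G'}(X)`, so
`δ|X| ≤ p|X||Y| + γpn|X|`, that is `p|Y| ≥ δ - γpn`, where the error is small compared to `δ`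
if `γ` is small compared to `ε`.
-/

open Filter Real

namespace Resilience

variable {V : Type*}

/-- The degree of a vertex, as the cardinality of its neighbourhood. -/
noncomputable def deg (G : SimpleGraph V) (v : V) : ℕ := (G.neighborSet v).ncard

/-- The neighbourhood of a set of vertices: all vertices with a neighbour in `X`. -/
def nbhd (G : SimpleGraph V) (X : Set V) : Set V := {v | ∃ x ∈ X, G.Adj v x}

/-- The minimum degree over a set of vertices. -/
noncomputable def minDeg (G : SimpleGraph V) (X : Set V) : ℕ :=
  sInf ((fun v => deg G v) '' X)

/-- The number of edges of `G` with one endpoint in `X` and the other in `Y`. -/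
noncomputable def eBetween (G : SimpleGraph V) (X Y : Set V) : ℕ :=
  {e ∈ G.edgeSet | ∃ x ∈ X, ∃ y ∈ Y, e = s(x, y)}.ncard

/-- The number of edges of `G` with both endpoints in `A`. -/
noncomputable def eIn (G : SimpleGraph V) (A : Set V) : ℕ :=
  {e ∈ G.edgeSet | ∀ v ∈ e, v ∈ A}.ncard

/-- The graph on `V` whose edges are the consecutive pairs of the list `l`;
this lets us view a path, recorded as a list of distinct vertices, as a graph. -/
def listGraph (l : List V) : SimpleGraph V :=
  SimpleGraph.fromEdgeSet {e | ∃ q ∈ l.zip l.tail, e = s(q.1, q.2)}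

/-- `l` is a (nonempty) path on `V` all of whose edges lie in `G`. -/
def IsPathOn (G : SimpleGraph V) (l : List V) : Prop :=
  l ≠ [] ∧ l.Nodup ∧ l.Chain' G.Adj

/-- `l` is a longest path with all edges in `G`. -/
def IsLongestPathOn (G : SimpleGraph V) (l : List V) : Prop :=
  IsPathOn G l ∧ ∀ l' : List V, IsPathOn G l' → l'.length ≤ l.length

/-- `l'` is obtained from the path `l` (with fixed last endpoint) by a single rotation
within `G`, whose broken edge lies on the original path `P`.  Writing
`l = a :: t₁ ++ c :: b :: t₂`, the pivot is `b`, the new edge is `ab ∈ G`, the broken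
edge is `cb` (an edge of `P`), and the rotated path is `(a :: t₁ ++ [c]).reverse ++ b :: t₂`. -/
def IsRotation (G : SimpleGraph V) (P l l' : List V) : Prop :=
  ∃ (a c b : V) (t₁ t₂ : List V),
    l = a :: t₁ ++ c :: b :: t₂ ∧ G.Adj a b ∧ (listGraph P).Adj c b ∧
    l' = (a :: t₁ ++ [c]).reverse ++ b :: t₂

/-- The set of paths obtainable from `P` by at most `t` successive rotations within `G`
with fixed last endpoint, all broken edges lying on `P`. -/
def rotSet (G : SimpleGraph V) (P : List V) : ℕ → Set (List V)
  | 0 => {P}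
  | t + 1 => rotSet G P t ∪ {l' | ∃ l ∈ rotSet G P t, IsRotation G P l l'}

/-- `R^t_{G,P,u}`: the set of endpoints of paths obtainable from `P` by at most `t`
successive rotations within `G` with fixed last endpoint. -/
def Rset (G : SimpleGraph V) (P : List V) (t : ℕ) : Set V :=
  {x | ∃ l ∈ rotSet G P t, l.head? = some x}

/-- The family `H^ε_{n,p}` of Pósa-type subgraphs: there is an ordering of the vertices
with non-increasing degrees such that `d_H(v_i) ≤ (n-i)p - εnp` for all `i < n/2`
(1-based indexing). -/
def PosaFamily (n : ℕ) (p ε : ℝ) (H : SimpleGraph (Fin n)) : Prop :=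
  ∃ v : Fin n → Fin n, Function.Bijective v ∧
    (∀ i j : Fin n, i ≤ j → deg H (v j) ≤ deg H (v i)) ∧
    ∀ i : Fin n, ((i.1 : ℝ) + 1) < n / 2 →
      (deg H (v i) : ℝ) ≤ ((n : ℝ) - ((i.1 : ℝ) + 1)) * p - ε * n * p

/-- The family `H^{ε,δ}_{n,p}` of (shifted) Chvátal-type subgraphs, where the shift
`δn` is recorded as a natural number `s`: there is an ordering of the vertices with
non-increasing degrees such that for all `i < n/2` (1-based indexing), either
`d_H(v_i) ≤ (n-i)p - εnp` or `d_H(v_{n-i-s}) ≤ ip - εnp`. -/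
def ChvatalFamily (n : ℕ) (p ε : ℝ) (s : ℕ) (H : SimpleGraph (Fin n)) : Prop :=
  ∃ v : Fin n → Fin n, Function.Bijective v ∧
    (∀ i j : Fin n, i ≤ j → deg H (v j) ≤ deg H (v i)) ∧
    ∀ i : Fin n, ((i.1 : ℝ) + 1) < n / 2 →
      ((deg H (v i) : ℝ) ≤ ((n : ℝ) - ((i.1 : ℝ) + 1)) * p - ε * n * p ∨
       (deg H (v ⟨n - (i.1 + 1) - s - 1, by have := i.2; omega⟩) : ℝ) ≤
         ((i.1 : ℝ) + 1) * p - ε * n * p)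

/-- The probability weight of a fixed graph `G` in the binomial random graph `G_{n,p}`. -/
noncomputable def weight (n : ℕ) (p : ℝ) (G : SimpleGraph (Fin n)) : ℝ :=
  p ^ G.edgeSet.ncard * (1 - p) ^ (n.choose 2 - G.edgeSet.ncard)

open Classical in
/-- The probability that the binomial random graph `G_{n,p}` satisfies the property `Q`. -/
noncomputable def Pr (n : ℕ) (p : ℝ) (Q : SimpleGraph (Fin n) → Prop) : ℝ :=
  ∑ G : SimpleGraph (Fin n), if Q G then weight n p G else 0

/-- Property `RE(δ)` for a (connected) graph `G` on `n` vertices: for every path `P`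
on the vertex set, either `G ∪ P` has a longer path, or there are at least `δn` vertices
`v`, each with a set `T v` of at least `δn` vertices `w`, such that `G ∪ P` has a path
from `v` to `w` with the same vertex set as `P`. -/
def RE (n : ℕ) (δ : ℝ) (G : SimpleGraph (Fin n)) : Prop :=
  G.Connected ∧
  ∀ P : List (Fin n), P ≠ [] → P.Nodup →
    (∃ Q : List (Fin n), IsPathOn (G ⊔ listGraph P) Q ∧ P.length < Q.length) ∨
    (∃ S : Set (Fin n), δ * n ≤ S.ncard ∧
      ∃ T : Fin n → Set (Fin n), (∀ v ∈ S, δ * n ≤ (T v).ncard) ∧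
        ∀ v ∈ S, ∀ w ∈ T v, ∃ Q : List (Fin n),
          IsPathOn (G ⊔ listGraph P) Q ∧ Q.head? = some v ∧ Q.getLast? = some w ∧
          Q.toFinset = P.toFinset)

/-- `G₂` complements `G₁` (with respect to parameter `δ` as in `RE(δ)`): for every path
`P` on the vertex set, either `G₁ ∪ P` has a longer path, or there are sets `S`, `T v`
as in the definition of `RE(δ)` together with `v ∈ S` and `w ∈ T v` such that `vw` is an
edge of `G₁ ∪ G₂`. -/
def Complements (n : ℕ) (δ : ℝ) (G₁ G₂ : SimpleGraph (Fin n)) : Prop :=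
  ∀ P : List (Fin n), P ≠ [] → P.Nodup →
    (∃ Q : List (Fin n), IsPathOn (G₁ ⊔ listGraph P) Q ∧ P.length < Q.length) ∨
    (∃ S : Set (Fin n), δ * n ≤ S.ncard ∧
      ∃ T : Fin n → Set (Fin n), (∀ v ∈ S, δ * n ≤ (T v).ncard) ∧
        (∀ v ∈ S, ∀ w ∈ T v, ∃ Q : List (Fin n),
          IsPathOn (G₁ ⊔ listGraph P) Q ∧ Q.head? = some v ∧ Q.getLast? = some w ∧
          Q.toFinset = P.toFinset) ∧
        ∃ v ∈ S, ∃ w ∈ T v, (G₁ ⊔ G₂).Adj v w)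

open scoped Finset Topology

/-! ### Probabilities in the binomial random graph -/

section Probability

variable {n : ℕ} {p : ℝ}

open scoped Classical in
/-- This is the independence of the edges, in generating-function form. -/
lemma sum_weight_mul_prod_edgeFinset (n : ℕ) (p : ℝ) (f : Sym2 (Fin n) → ℝ) :
    ∑ G : SimpleGraph (Fin n), weight n p G * ∏ e ∈ G.edgeFinset, f e =
      ∏ e ∈ (⊤ : SimpleGraph (Fin n)).edgeFinset, (p * f e + (1 - p)) := by
  rw [Finset.prod_add]
  refine Finset.sum_bij' (fun G _ => G.edgeFinset)
    (fun s _ => SimpleGraph.fromEdgeSet (s : Set (Sym2 (Fin n))))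
    (fun G _ => Finset.mem_powerset.2 (SimpleGraph.edgeFinset_mono le_top))
    (fun _ _ => Finset.mem_univ _) (fun G _ => by simp) (fun s hs => ?_) (fun G _ => ?_)
  · have hdiag : ∀ e ∈ s, ¬ e.IsDiag := fun e he =>
      SimpleGraph.not_isDiag_of_mem_edgeFinset (Finset.mem_powerset.1 hs he)
    ext e
    simpa using hdiag e
  · have hcard : G.edgeSet.ncard = #G.edgeFinset := by
      rw [← SimpleGraph.coe_edgeFinset, Set.ncard_coe_finset]
    have htop : #(⊤ : SimpleGraph (Fin n)).edgeFinset = n.choose 2 := by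
      simpa using SimpleGraph.card_edgeFinset_top_eq_card_choose_two (V := Fin n)
    rw [weight, Finset.prod_mul_distrib, Finset.prod_const, Finset.prod_const,
      Finset.card_sdiff_of_subset (SimpleGraph.edgeFinset_mono le_top), htop, hcard]
    ring

lemma sum_weight (n : ℕ) (p : ℝ) : ∑ G : SimpleGraph (Fin n), weight n p G = 1 := by
  simpa using sum_weight_mul_prod_edgeFinset n p fun _ => 1

lemma weight_nonneg (hp : p ∈ Set.Icc 0 1) (G : SimpleGraph (Fin n)) : 0 ≤ weight n p G :=
  mul_nonneg (pow_nonneg hp.1 _) (pow_nonneg (sub_nonneg.2 hp.2) _)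

lemma Pr_le_sum_weight_mul (hp : p ∈ Set.Icc 0 1) {Q : SimpleGraph (Fin n) → Prop}
    {f : SimpleGraph (Fin n) → ℝ} (hf : ∀ G, 0 ≤ f G) (hQf : ∀ G, Q G → 1 ≤ f G) :
    Pr n p Q ≤ ∑ G : SimpleGraph (Fin n), weight n p G * f G := by
  refine Finset.sum_le_sum fun G _ => ?_
  split_ifs with hQ
  · exact le_mul_of_one_le_right (weight_nonneg hp G) (hQf G hQ)
  · exact mul_nonneg (weight_nonneg hp G) (hf G)

lemma Pr_not (Q : SimpleGraph (Fin n) → Prop) : Pr n p (fun G => ¬ Q G) = 1 - Pr n p Q := by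
  rw [eq_sub_iff_add_eq, ← sum_weight n p, Pr, Pr, ← Finset.sum_add_distrib]
  refine Finset.sum_congr rfl fun G _ => ?_
  by_cases hQ : Q G <;> simp [hQ]

lemma Pr_mono (hp : p ∈ Set.Icc 0 1) {Q R : SimpleGraph (Fin n) → Prop}
    (hQR : ∀ G, Q G → R G) : Pr n p Q ≤ Pr n p R := by
  refine Finset.sum_le_sum fun G _ => ?_
  have := weight_nonneg hp G
  by_cases hQ : Q G
  · simp [hQ, hQR G hQ]
  · by_cases hR : R G <;> simp [hQ, hR, this]

lemma Pr_or_le (hp : p ∈ Set.Icc 0 1) (Q R : SimpleGraph (Fin n) → Prop) :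
    Pr n p (fun G => Q G ∨ R G) ≤ Pr n p Q + Pr n p R := by
  rw [Pr, Pr, Pr, ← Finset.sum_add_distrib]
  refine Finset.sum_le_sum fun G _ => ?_
  have := weight_nonneg hp G
  by_cases hQ : Q G <;> by_cases hR : R G <;> simp [hQ, hR, this]

lemma Pr_exists_mem_le_sum {ι : Type*} (hp : p ∈ Set.Icc 0 1) (s : Finset ι)
    (Q : ι → SimpleGraph (Fin n) → Prop) :
    Pr n p (fun G => ∃ i ∈ s, Q i G) ≤ ∑ i ∈ s, Pr n p (Q i) := by
  classical
  induction s using Finset.induction_on with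
  | empty => simp [Pr]
  | insert i s hi ih =>
    rw [Finset.sum_insert hi]
    simp only [Finset.exists_mem_insert]
    exact (Pr_or_le hp _ _).trans (add_le_add_right ih _)

lemma Pr_exists_mem_le_card_mul {ι : Type*} (hp : p ∈ Set.Icc 0 1) {s : Finset ι}
    {Q : ι → SimpleGraph (Fin n) → Prop} {a : ℝ} (ha : ∀ i ∈ s, Pr n p (Q i) ≤ a) :
    Pr n p (fun G => ∃ i ∈ s, Q i G) ≤ #s * a :=
  (Pr_exists_mem_le_sum hp s Q).trans <| by
    simpa only [nsmul_eq_mul] using Finset.sum_le_card_nsmul s _ a ha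

end Probability

/-! ### Chernoff bounds -/

section Chernoff

variable {n : ℕ} {p : ℝ}

lemma exp_mul_le_one_add {w b t : ℝ} (hw : w ∈ Set.Icc 0 b) (ht : |t| * b ≤ 1) :
    exp (t * w) ≤ 1 + (t + b * t ^ 2) * w := by
  have habs : |t * w| ≤ 1 := by
    rw [abs_mul, abs_of_nonneg hw.1]
    exact (mul_le_mul_of_nonneg_left hw.2 (abs_nonneg t)).trans ht
  have hsq : (t * w) ^ 2 ≤ b * t ^ 2 * w := by
    nlinarith [mul_nonneg (sq_nonneg t) (mul_nonneg hw.1 (sub_nonneg.2 hw.2))]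
  linarith [(abs_le.1 (abs_exp_sub_one_sub_id_le habs)).2]

open scoped Classical in
lemma sum_weight_mul_exp_le (hp : p ∈ Set.Icc 0 1) {w : Sym2 (Fin n) → ℝ} {b t : ℝ}
    (hw : ∀ e, w e ∈ Set.Icc 0 b) (ht : |t| * b ≤ 1) :
    ∑ G : SimpleGraph (Fin n), weight n p G * exp (t * ∑ e ∈ G.edgeFinset, w e) ≤
      exp (p * (t + b * t ^ 2) * ∑ e ∈ (⊤ : SimpleGraph (Fin n)).edgeFinset, w e) := by
  simp only [Finset.mul_sum, exp_sum]
  rw [sum_weight_mul_prod_edgeFinset]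
  refine Finset.prod_le_prod (fun e _ => ?_) fun e _ => ?_
  · exact add_nonneg (mul_nonneg hp.1 (exp_nonneg _)) (sub_nonneg.2 hp.2)
  · calc p * exp (t * w e) + (1 - p)
        ≤ p * (1 + (t + b * t ^ 2) * w e) + (1 - p) := by
          gcongr
          exacts [hp.1, exp_mul_le_one_add (hw e) ht]
      _ = p * (t + b * t ^ 2) * w e + 1 := by ring
      _ ≤ exp (p * (t + b * t ^ 2) * w e) := add_one_le_exp _

open scoped Classical in
/-- Upper deviations are the case `0 < t`, lower deviations the case `t < 0`. -/
lemma Pr_edgeFinset_sum_deviation_le (hp : p ∈ Set.Icc 0 1) {w : Sym2 (Fin n) → ℝ} {b t : ℝ}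
    (hw : ∀ e, w e ∈ Set.Icc 0 b) (ht : |t| * b ≤ 1) (a : ℝ) :
    Pr n p (fun G => a ≤ t * (∑ e ∈ G.edgeFinset, w e -
        p * ∑ e ∈ (⊤ : SimpleGraph (Fin n)).edgeFinset, w e)) ≤
      exp (p * b * t ^ 2 * ∑ e ∈ (⊤ : SimpleGraph (Fin n)).edgeFinset, w e - a) := by
  set W := ∑ e ∈ (⊤ : SimpleGraph (Fin n)).edgeFinset, w e
  calc _ ≤ ∑ G : SimpleGraph (Fin n),
          weight n p G * exp (t * (∑ e ∈ G.edgeFinset, w e - p * W) - a) :=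
        Pr_le_sum_weight_mul hp (fun _ => exp_nonneg _) fun G hG =>
          one_le_exp (sub_nonneg.2 hG)
    _ = (∑ G : SimpleGraph (Fin n), weight n p G * exp (t * ∑ e ∈ G.edgeFinset, w e)) *
          exp (-(t * p * W + a)) := by
        rw [Finset.sum_mul]
        refine Finset.sum_congr rfl fun G _ => ?_
        rw [mul_assoc, ← exp_add]
        ring_nf
    _ ≤ exp (p * (t + b * t ^ 2) * W) * exp (-(t * p * W + a)) := by
        gcongr
        exact sum_weight_mul_exp_le hp hw ht
    _ = exp (p * b * t ^ 2 * W - a) := by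
        rw [← exp_add]
        ring_nf

end Chernoff

/-! ### Pairs of adjacent vertices between two sets -/

open scoped Classical in
/-- The number of pairs in `X × Y` that form the unordered pair `e`. It is the weight with which
the edge `e` contributes to the number `#(G.interedges X Y)` of ordered pairs. -/
noncomputable def pairMultiplicity (X Y : Finset V) (e : Sym2 V) : ℕ :=
  #{q ∈ X ×ˢ Y | s(q.1, q.2) = e}

lemma pairMultiplicity_le_two (X Y : Finset V) (e : Sym2 V) : pairMultiplicity X Y e ≤ 2 := by
  classical
  induction e using Sym2.ind with
  | _ a b =>
    refine (Finset.card_le_card (t := {(a, b), (b, a)}) fun q hq => ?_).trans Finset.card_le_two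
    simpa [Prod.ext_iff] using (Finset.mem_filter.1 hq).2

lemma sum_pairMultiplicity (G : SimpleGraph V) [DecidableRel G.Adj] [Fintype G.edgeSet]
    (X Y : Finset V) : ∑ e ∈ G.edgeFinset, pairMultiplicity X Y e = #(G.interedges X Y) := by
  classical
  rw [Finset.card_eq_sum_card_fiberwise (f := fun q : V × V => s(q.1, q.2)) (t := G.edgeFinset)]
  · refine Finset.sum_congr rfl fun e he => congrArg Finset.card ?_
    ext q
    simp only [Finset.mem_filter, SimpleGraph.interedges_def, and_congr_left_iff]
    rintro rfl
    simpa using fun _ _ => he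
  · intro q hq
    simpa using ((SimpleGraph.mem_interedges_iff _).1 hq).2.2

open scoped Classical in
lemma Pr_card_interedges_deviation_le {n : ℕ} {p τ : ℝ} (hp : p ∈ Set.Icc 0 1) (hτ : |τ| ≤ 2)
    (X Y : Finset (Fin n)) :
    Pr n p (fun G => τ ^ 2 * (p * n) * #X ≤ τ * (#(G.interedges X Y) -
        p * #((⊤ : SimpleGraph (Fin n)).interedges X Y))) ≤
      exp (-(τ ^ 2 / 8 * (p * n) * #X)) := by
  have hmult : ∀ e, (pairMultiplicity X Y e : ℝ) ∈ Set.Icc 0 2 := fun e =>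
    ⟨Nat.cast_nonneg _, by exact_mod_cast pairMultiplicity_le_two X Y e⟩
  have hpairs : (#((⊤ : SimpleGraph (Fin n)).interedges X Y) : ℝ) ≤ #X * n := by
    have hY : #Y ≤ n := by simpa using Finset.card_le_univ Y
    exact_mod_cast (SimpleGraph.card_interedges_le_mul _ X Y).trans (Nat.mul_le_mul_left _ hY)
  have ht : |τ / 4| * 2 ≤ 1 := by
    rw [abs_div, abs_of_pos (four_pos (α := ℝ))]
    linarith
  have hdev := Pr_edgeFinset_sum_deviation_le hp hmult ht (τ ^ 2 * (p * n) * #X / 4)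
  have hexponent := mul_le_mul_of_nonneg_left hpairs (mul_nonneg hp.1 (sq_nonneg τ))
  simp only [← Nat.cast_sum, sum_pairMultiplicity] at hdev
  refine (Pr_mono hp fun G hG => ?_).trans (hdev.trans (exp_le_exp.2 ?_)) <;> linarith

lemma card_interedges_eq_sum (G : SimpleGraph V) [DecidableRel G.Adj] (X Y : Finset V) :
    #(G.interedges X Y) = ∑ x ∈ X, #{y ∈ Y | G.Adj x y} := by
  simp only [SimpleGraph.interedges_def, Finset.card_filter, Finset.sum_product]

lemma card_interedges_singleton_univ [Fintype V] (G : SimpleGraph V) [DecidableRel G.Adj]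
    (v : V) : #(G.interedges {v} Finset.univ) = deg G v := by
  rw [card_interedges_eq_sum, Finset.sum_singleton, deg, ← Set.ncard_coe_finset]
  simp [SimpleGraph.neighborSet]

open scoped Classical in
lemma card_mul_minDeg_le_card_interedges [Fintype V] {F G : SimpleGraph V} (hFG : F ≤ G)
    (X : Set V) : X.ncard * minDeg F X ≤ #(G.interedges X.toFinset (nbhd F X).toFinset) := by
  rw [card_interedges_eq_sum, Set.ncard_eq_toFinset_card', ← smul_eq_mul]
  refine Finset.card_nsmul_le_sum _ _ _ fun x hx => ?_
  have hxX : x ∈ X := Set.mem_toFinset.1 hx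
  refine (Nat.sInf_le (Set.mem_image_of_mem _ hxX)).trans ?_
  rw [deg, ← Set.ncard_coe_finset]
  refine Set.ncard_le_ncard fun y (hy : F.Adj x y) => ?_
  simpa using And.intro ⟨x, hxX, hy.symm⟩ (hFG hy)

/-! ### Typical graphs -/

lemma deg_top [Fintype V] (v : V) : (deg ⊤ v : ℝ) = Fintype.card V - 1 := by
  have hpos : 1 ≤ Fintype.card V := Fintype.card_pos_iff.2 ⟨v⟩
  rw [deg, SimpleGraph.neighborSet_top, Set.ncard_compl, Set.ncard_singleton,
    Nat.card_eq_fintype_card, Nat.cast_sub hpos, Nat.cast_one]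

lemma deg_le_deg_sdiff_add_deg [Finite V] (G H : SimpleGraph V) (v : V) :
    deg G v ≤ deg (G \ H) v + deg H v := by
  refine (Set.ncard_le_ncard (fun w hw => ?_)).trans (Set.ncard_union_le _ _)
  by_cases hH : H.Adj v w
  · exact Or.inr hH
  · exact Or.inl ⟨hw, hH⟩

open scoped Classical in
/-- The pseudo-randomness of `G_{n,p}` behind the expansion, with relative error `γ`: no degree is
far below average, and no set `X` of at least `m` vertices sends many more edges than expected
to any set `Y`. Pairs in `X × Y` are ordered, so edges inside `X ∩ Y` count twice. -/
structure IsTypical [Fintype V] (p γ m : ℝ) (G : SimpleGraph V) : Prop where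
  le_deg (v : V) : (Fintype.card V - 1) * p - γ * (p * Fintype.card V) ≤ deg G v
  card_interedges_le (X Y : Finset V) : m ≤ #X →
    (#(G.interedges X Y) : ℝ) ≤ p * #X * #Y + γ * (p * Fintype.card V) * #X

section Expansion

variable [Fintype V] {p γ m ε : ℝ} {F G H : SimpleGraph V} {X : Set V}

lemma IsTypical.minDeg_sub_le_mul_ncard_nbhd (hG : IsTypical p γ m G) (hFG : F ≤ G)
    (hX : X.Nonempty) (hm : m ≤ X.ncard) :
    minDeg F X - γ * (p * Fintype.card V) ≤ p * (nbhd F X).ncard := by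
  classical
  have hXpos : (0 : ℝ) < X.ncard := by exact_mod_cast (Set.ncard_pos (Set.toFinite X)).2 hX
  have hlower : (X.ncard * minDeg F X : ℝ) ≤
      #(G.interedges X.toFinset (nbhd F X).toFinset) := by
    exact_mod_cast card_mul_minDeg_le_card_interedges hFG X
  have hupper := hG.card_interedges_le X.toFinset (nbhd F X).toFinset
    (by rwa [← Set.ncard_eq_toFinset_card'])
  simp only [← Set.ncard_eq_toFinset_card'] at hupper
  refine le_of_mul_le_mul_left ?_ hXpos
  linarith

lemma IsTypical.le_minDeg_sdiff (hG : IsTypical p γ m G) (hX : X.Nonempty)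
    (hH : ∀ v, (deg H v : ℝ) ≤ (Fintype.card V - 1) * p - ε * (p * Fintype.card V)) :
    (ε - γ) * (p * Fintype.card V) ≤ minDeg (G \ H) X := by
  obtain ⟨v, -, hv⟩ := Nat.sInf_mem (hX.image fun v => deg (G \ H) v)
  have hsplit : (deg G v : ℝ) ≤ deg (G \ H) v + deg H v := by
    exact_mod_cast deg_le_deg_sdiff_add_deg G H v
  rw [minDeg, ← hv]
  linarith [hG.le_deg v, hH v]

/-- The choice of `γ` means `2 * γ = κ * (ε - γ)`, so that the error `γpn` is at most half of
`κ * minDeg (G \ H) X`. -/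
lemma IsTypical.expansion {κ : ℝ} (hG : IsTypical p γ m G) (hp : 0 < p) (hκ : 0 < κ)
    (hγ : 0 < γ) (hγκ : (2 + κ) * γ = κ * ε)
    (hH : ∀ v, (deg H v : ℝ) ≤ (Fintype.card V - 1) * p - ε * (p * Fintype.card V))
    (hX : X.Nonempty) (hm : m ≤ X.ncard) :
    (1 - κ) * p⁻¹ * minDeg (G \ H) X < (nbhd (G \ H) X).ncard ∧
      (1 - κ) * ε * Fintype.card V ≤ (nbhd (G \ H) X).ncard := by
  have hcard : (0 : ℝ) < Fintype.card V := by
    exact_mod_cast Fintype.card_pos_iff.2 hX.to_type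
  set n := (Fintype.card V : ℝ)
  set d := (minDeg (G \ H) X : ℝ)
  set N := ((nbhd (G \ H) X).ncard : ℝ)
  have hN : d - γ * (p * n) ≤ p * N := hG.minDeg_sub_le_mul_ncard_nbhd sdiff_le hX hm
  have hd : (ε - γ) * (p * n) ≤ d := hG.le_minDeg_sdiff hX hH
  have herror : 0 < γ * (p * n) := by positivity
  constructor
  · have hκd : 2 * (γ * (p * n)) ≤ κ * d := by
      linear_combination κ * hd + (p * n) * hγκ
    rw [mul_right_comm, ← div_eq_mul_inv, div_lt_iff₀ hp]
    linarith
  · have hκγ : 0 < κ * (γ * (p * n)) := by positivity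
    refine le_of_mul_le_mul_left (a := p) ?_ hp
    linear_combination hN + hd + hκγ.le + (p * n) * hγκ

end Expansion

/-! ### Random graphs are typical -/

section Typical

variable {n : ℕ} {p γ m : ℝ}

lemma Pr_deg_lt_le (hp : p ∈ Set.Icc 0 1) (hγ : γ ∈ Set.Ioc 0 1) (v : Fin n) :
    Pr n p (fun G => deg G v < (n - 1) * p - γ * (p * n)) ≤ exp (-(γ ^ 2 / 8 * (p * n))) := by
  classical
  have hdev := Pr_card_interedges_deviation_le (τ := -γ) hp
    (by rw [abs_neg, abs_of_pos hγ.1]; linarith [hγ.2]) {v} Finset.univ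
  simp only [card_interedges_singleton_univ, deg_top, Fintype.card_fin, neg_sq,
    Finset.card_singleton, Nat.cast_one, mul_one] at hdev
  refine (Pr_mono hp fun G hG => ?_).trans hdev
  nlinarith [mul_le_mul_of_nonneg_left hG.le hγ.1.le]

open scoped Classical in
lemma Pr_lt_card_interedges_le (hp : p ∈ Set.Icc 0 1) (hγ : γ ∈ Set.Ioc 0 1)
    (X Y : Finset (Fin n)) :
    Pr n p (fun G => p * #X * #Y + γ * (p * n) * #X < #(G.interedges X Y)) ≤
      exp (-(γ ^ 2 / 8 * (p * n) * #X)) := by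
  have hpairs : (p * #((⊤ : SimpleGraph (Fin n)).interedges X Y) : ℝ) ≤ p * (#X * #Y) :=
    mul_le_mul_of_nonneg_left (by exact_mod_cast SimpleGraph.card_interedges_le_mul _ X Y) hp.1
  refine (Pr_mono hp fun G hG => ?_).trans (Pr_card_interedges_deviation_le (τ := γ) hp
    (by rw [abs_of_pos hγ.1]; linarith [hγ.2]) X Y)
  have hexcess : γ * (p * n) * #X ≤
      #(G.interedges X Y) - p * #((⊤ : SimpleGraph (Fin n)).interedges X Y) := by linarith
  linarith [mul_le_mul_of_nonneg_left hexcess hγ.1.le]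

lemma Pr_not_isTypical_le (hp : p ∈ Set.Icc 0 1) (hγ : γ ∈ Set.Ioc 0 1) :
    Pr n p (fun G => ¬ IsTypical p γ m G) ≤
      n * exp (-(γ ^ 2 / 8 * (p * n))) + 4 ^ n * exp (-(γ ^ 2 / 8 * (p * n) * m)) := by
  classical
  let large : Finset (Finset (Fin n) × Finset (Fin n)) := {q | m ≤ #q.1}
  have hlarge : (#large : ℝ) ≤ 4 ^ n := by
    have := Finset.card_le_univ large
    rw [Fintype.card_prod, Fintype.card_finset, Fintype.card_fin, ← mul_pow] at this
    exact_mod_cast this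
  have hpn : 0 ≤ γ ^ 2 / 8 * (p * n) := by have := hp.1; positivity
  calc Pr n p (fun G => ¬ IsTypical p γ m G)
      ≤ Pr n p (fun G => (∃ v ∈ Finset.univ, deg G v < (n - 1) * p - γ * (p * n)) ∨
          ∃ q ∈ large, p * #q.1 * #q.2 + γ * (p * n) * #q.1 < #(G.interedges q.1 q.2)) := by
        refine Pr_mono hp fun G hG => ?_
        contrapose! hG
        exact ⟨by simpa using hG.1, fun X Y hX => by
          simpa using hG.2 (X, Y) (Finset.mem_filter.2 ⟨Finset.mem_univ _, hX⟩)⟩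
    _ ≤ n * exp (-(γ ^ 2 / 8 * (p * n))) + #large * exp (-(γ ^ 2 / 8 * (p * n) * m)) := by
        refine (Pr_or_le hp _ _).trans (add_le_add ?_ ?_)
        · simpa using Pr_exists_mem_le_card_mul hp fun v (_ : v ∈ Finset.univ) =>
            Pr_deg_lt_le hp hγ v
        · refine Pr_exists_mem_le_card_mul hp fun q hq =>
            (Pr_lt_card_interedges_le hp hγ q.1 q.2).trans ?_
          gcongr
          exact (Finset.mem_filter.1 hq).2
    _ ≤ _ := by gcongr

lemma tendsto_mul_exp_neg_two_log_add_four_pow_mul_exp :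
    Tendsto (fun n : ℕ => n * exp (-(2 * log n)) + 4 ^ n * exp (-(2 * n))) atTop (𝓝 0) := by
  have hinv : ∀ᶠ n : ℕ in atTop, (n : ℝ)⁻¹ = n * exp (-(2 * log n)) := by
    filter_upwards [eventually_gt_atTop 0] with n hn
    have : (0 : ℝ) < n := by exact_mod_cast hn
    rw [two_mul, neg_add, exp_add, exp_neg, exp_log this, mul_inv_cancel_left₀ this.ne']
  have hgeom : Tendsto (fun n : ℕ => (4 * exp (-2)) ^ n) atTop (𝓝 0) := by
    refine tendsto_pow_atTop_nhds_zero_of_lt_one (by positivity) ?_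
    have : 4 < exp 2 := by
      rw [show (2 : ℝ) = 1 + 1 by norm_num, exp_add]
      nlinarith [exp_one_gt_two]
    rwa [exp_neg, ← div_eq_mul_inv, div_lt_one (exp_pos 2)]
  have hpow : ∀ n : ℕ, (4 * exp (-2)) ^ n = 4 ^ n * exp (-(2 * n)) := fun n => by
    rw [mul_pow, ← exp_nat_mul]
    ring_nf
  simp only [hpow] at hgeom
  simpa using ((tendsto_inv_atTop_nhds_zero_nat (𝕜 := ℝ)).congr' hinv).add hgeom

lemma pos_of_mul_log_div_le {C : ℝ} (hC : 0 < C) (hn : 1 < n) (hp : C * log n / n ≤ p) :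
    0 < p := by
  have hlog : 0 < log n := log_pos (by exact_mod_cast hn)
  exact lt_of_lt_of_le (by positivity) hp

lemma eventually_le_Pr_isTypical (hγ : γ ∈ Set.Ioc 0 1) {η : ℝ} (hη : 0 < η) :
    ∀ᶠ n : ℕ in atTop, ∀ p : ℝ, 16 / γ ^ 2 * log n / n ≤ p → p ≤ 1 →
      1 - η ≤ Pr n p (IsTypical p γ (n / log n)) := by
  filter_upwards [eventually_gt_atTop 1,
    tendsto_mul_exp_neg_two_log_add_four_pow_mul_exp.eventually_le_const hη]
    with n hn hbound p hp hp1
  have hγ0 := hγ.1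
  have hn0 : (0 : ℝ) < n := by positivity
  have hlog : 0 < log n := log_pos (by exact_mod_cast hn)
  have hp0 : 0 ≤ p := (pos_of_mul_log_div_le (by positivity) hn hp).le
  have hpn : 2 * log n ≤ γ ^ 2 / 8 * (p * n) := by
    rw [div_le_iff₀ hn0, div_mul_eq_mul_div, div_le_iff₀ (by positivity)] at hp
    linarith
  have hpnm : 2 * (n : ℝ) ≤ γ ^ 2 / 8 * (p * n) * (n / log n) := by
    calc 2 * (n : ℝ) = 2 * log n * (n / log n) := by field_simp
      _ ≤ _ := by gcongr
  have htypical := Pr_not_isTypical_le (n := n) (m := n / log n) ⟨hp0, hp1⟩ hγ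
  rw [Pr_not] at htypical
  have hexp : n * exp (-(γ ^ 2 / 8 * (p * n))) +
        4 ^ n * exp (-(γ ^ 2 / 8 * (p * n) * (n / log n))) ≤
      n * exp (-(2 * log n)) + 4 ^ n * exp (-(2 * n)) := by gcongr
  linarith

end Typical

/-! ### Expansion in the random graph -/

theorem neighbourhood_expansion_large_general {ε κ : ℝ} (hε : 0 < ε) (hε1 : ε ≤ 1) (hκ : 0 < κ) :
    ∃ C : ℝ, 0 < C ∧ ∀ η : ℝ, 0 < η → ∀ᶠ n : ℕ in atTop,
      ∀ p : ℝ, C * log n / n ≤ p → p ≤ 1 →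
        1 - η ≤ Pr n p (fun G =>
          ∀ H : SimpleGraph (Fin n), (∀ v, (deg H v : ℝ) ≤ (n - 1) * p - ε * (p * n)) →
            ∀ X : Set (Fin n), n / log n ≤ X.ncard →
              (1 - κ) * p⁻¹ * minDeg (G \ H) X < (nbhd (G \ H) X).ncard ∧
              (1 - κ) * ε * n ≤ (nbhd (G \ H) X).ncard) := by
  obtain ⟨γ, hγκ⟩ : ∃ γ, (2 + κ) * γ = κ * ε := ⟨κ * ε / (2 + κ), by field_simp⟩
  have hγ0 : 0 < γ := by
    have : 0 < (2 + κ) * γ := by rw [hγκ]; positivity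
    exact pos_of_mul_pos_right this (by positivity)
  have hγ1 : γ ≤ 1 := by nlinarith
  refine ⟨16 / γ ^ 2, by positivity, fun η hη => ?_⟩
  filter_upwards [eventually_gt_atTop 1, eventually_le_Pr_isTypical ⟨hγ0, hγ1⟩ hη]
    with n hn htypical p hp hp1
  have hp0 : 0 < p := pos_of_mul_log_div_le (by positivity) hn hp
  refine (htypical p hp hp1).trans (Pr_mono ⟨hp0.le, hp1⟩ fun G hG H hH X hm => ?_)
  have hX : X.Nonempty := by
    have hlog : 0 < log n := log_pos (by exact_mod_cast hn)
    have : (0 : ℝ) < X.ncard := lt_of_lt_of_le (by positivity) hm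
    exact (Set.ncard_pos (Set.toFinite X)).1 (by exact_mod_cast this)
  simpa using hG.expansion (ε := ε) hp0 hκ hγ0 hγκ (by simpa using hH) hX hm

lemma ChvatalFamily.deg_le {n s : ℕ} {p ε : ℝ} {H : SimpleGraph (Fin n)}
    (hH : ChvatalFamily n p ε s H) (hp : 0 < p) (hn : 2 < n) (hεn : 1 < ε * n) (u : Fin n) :
    (deg H u : ℝ) ≤ (n - 1) * p - ε * (p * n) := by
  obtain ⟨v, hv, hanti, hchvatal⟩ := hH
  obtain ⟨j, rfl⟩ := hv.surjective u
  have hmax : (deg H (v j) : ℝ) ≤ deg H (v ⟨0, by omega⟩) := by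
    exact_mod_cast hanti ⟨0, by omega⟩ j (Nat.zero_le _)
  have hn2 : (2 : ℝ) < n := by exact_mod_cast hn
  rcases hchvatal ⟨0, by omega⟩ (by simp only [Nat.cast_zero]; linarith) with hfirst | hlast
  · simp only [Nat.cast_zero, zero_add] at hfirst
    linarith
  · simp only [Nat.cast_zero, zero_add, one_mul] at hlast
    have hneg : p * 1 < p * (ε * n) := mul_lt_mul_of_pos_left hεn hp
    linarith [(Nat.cast_nonneg _).trans hlast]

lemma ChvatalFamily.eventually_deg_le {C ε : ℝ} (hC : 0 < C) (hε : 0 < ε) :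
    ∀ᶠ n : ℕ in atTop, ∀ p : ℝ, C * log n / n ≤ p → ∀ (s : ℕ) (H : SimpleGraph (Fin n)),
      ChvatalFamily n p ε s H → ∀ v, (deg H v : ℝ) ≤ (n - 1) * p - ε * (p * n) := by
  filter_upwards [eventually_gt_atTop 2,
    (tendsto_natCast_atTop_atTop.const_mul_atTop hε).eventually_gt_atTop 1]
    with n hn hεn p hp s H hH
  exact hH.deg_le (pos_of_mul_log_div_le hC (by omega) hp) hn hεn

lemma eventually_div_log_le_mul_log_rpow {r : ℝ} (hr : -1 ≤ r) :
    ∀ᶠ n : ℕ in atTop, n / log n ≤ n * log n ^ r := by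
  filter_upwards [(tendsto_log_atTop.comp tendsto_natCast_atTop_atTop).eventually_ge_atTop 1]
    with n hlog
  rw [div_eq_mul_inv, ← rpow_neg_one]
  exact mul_le_mul_of_nonneg_left (rpow_le_rpow_of_exponent_le hlog hr) n.cast_nonneg

/-- Proposition 2.5(ii).  For every `0 < ε < 1` there exists `C > 0`
such that, for `p ≥ C log n / n`, a.a.s. for every `H ∈ H^{ε,ε}_{n,p}(G)` and every
`X ⊆ V` with `|X| ≥ n (log n)^{-1/2}` we have
`|N_{G∖H}(X)| > (1 - ε²/10) p⁻¹ δ_{G∖H}(X)`; in particular `|N_{G∖H}(X)| ≥ εn/2`. -/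
theorem neighbourhood_expansion_large (ε : ℝ) (hε : 0 < ε) (hε1 : ε < 1) :
    ∃ C : ℝ, 0 < C ∧ ∀ η : ℝ, 0 < η → ∃ N : ℕ, ∀ n : ℕ, N ≤ n →
      ∀ p : ℝ, C * Real.log n / n ≤ p → p ≤ 1 →
        1 - η ≤ Pr n p (fun G =>
          ∀ H : SimpleGraph (Fin n), H ≤ G → ChvatalFamily n p ε ⌈ε * n⌉₊ H →
            ∀ X : Set (Fin n), (n : ℝ) * Real.log n ^ (-(1/2) : ℝ) ≤ X.ncard →
              (1 - ε^2/10) * p⁻¹ * (minDeg (G \ H) X) < ((nbhd (G \ H) X).ncard : ℝ) ∧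
              ε * n / 2 ≤ ((nbhd (G \ H) X).ncard : ℝ)) := by
  obtain ⟨C, hC, hexpand⟩ :=
    neighbourhood_expansion_large_general hε hε1.le (κ := ε ^ 2 / 10) (by positivity)
  refine ⟨C, hC, fun η hη => eventually_atTop.1 ?_⟩
  filter_upwards [eventually_gt_atTop 1, hexpand η hη, ChvatalFamily.eventually_deg_le hC hε,
    eventually_div_log_le_mul_log_rpow (r := -(1 / 2)) (by norm_num)]
    with n hn hPr hdeg hthreshold p hp hp1
  have hp0 : 0 ≤ p := (pos_of_mul_log_div_le hC hn hp).le
  refine (hPr p hp hp1).trans (Pr_mono ⟨hp0, hp1⟩ fun G hG H _ hH X hX => ?_)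
  obtain ⟨hexpansion, hlinear⟩ := hG H (hdeg p hp _ H hH) X (hthreshold.trans hX)
  have hhalf : 1 / 2 ≤ 1 - ε ^ 2 / 10 := by nlinarith
  refine ⟨hexpansion, le_trans ?_ hlinear⟩
  calc ε * n / 2 = 1 / 2 * ε * n := by ring
    _ ≤ (1 - ε ^ 2 / 10) * ε * n := by gcongr

end Resilience
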